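/- Let M ∈ ℝ^{p×p} be positive semi-definite and b ∈ ℝ^p. If there exists a vector x ≥ 0 with Mx + b ≥ 0, then the linear complementarity problem LCP(M,b) — find x ≥ 0 with Mx + b ≥ 0 and xᵀ(Mx + b) = 0 — has a solution. -/

import Mathlib

open Matrix

/-- Finitely generated cones are closed. -/
lemma cone_closed_aux {p : ℕ} (A : (Fin p → ℝ) →ₗ[ℝ] (Fin p → ℝ)) (S : Finset (Fin p)) :
    IsClosed {y | ∃ x : Fin p → ℝ, 0 ≤ x ∧ (∀ i, i ∉ S → x i = 0) ∧ A x = y} := by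
  induction S using Finset.strongInduction with
  | H S ih =>
  by_cases hinj : ∀ d : Fin p → ℝ, (∀ i, i ∉ S → d i = 0) → A d = 0 → d = 0
  · let V : Submodule ℝ (Fin p → ℝ) :=
      { carrier := {d | ∀ i, i ∉ S → d i = 0}
        add_mem' := by
          intro a b ha hb i hi
          simp [ha i hi, hb i hi]
        zero_mem' := by intro i _; rfl
        smul_mem' := by
          intro c a ha i hi
          simp [ha i hi] }
    have hk : LinearMap.ker (A.comp V.subtype) = ⊥ := by
      rw [LinearMap.ker_eq_bot']
      intro m hm
      exact Subtype.ext (hinj m.1 m.2 hm)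
    have hce := LinearMap.isClosedEmbedding_of_injective (𝕜 := ℝ) hk
    have hcl : IsClosed {v : V | (0 : Fin p → ℝ) ≤ v.1} :=
      isClosed_le continuous_const continuous_subtype_val
    have := hce.isClosedMap _ hcl
    convert this using 1
    ext y
    constructor
    · rintro ⟨x, h0, hS, rfl⟩
      exact ⟨⟨x, hS⟩, h0, rfl⟩
    · rintro ⟨⟨x, hS⟩, h0, rfl⟩
      exact ⟨x, h0, hS, rfl⟩
  · push Not at hinj
    have : ∃ d : Fin p → ℝ, (∀ i, i ∉ S → d i = 0) ∧ A d = 0 ∧ ∃ i, 0 < d i := by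
      obtain ⟨d, hS, hA, hne⟩ := hinj
      obtain ⟨i, hi⟩ := Function.ne_iff.mp hne
      rcases lt_or_gt_of_ne hi with h | h
      · refine ⟨-d, fun j hj => by simp [hS j hj], by simp [hA], i, ?_⟩
        simpa using h
      · exact ⟨d, hS, hA, i, h⟩
    obtain ⟨d, hS, hA, i₁, hi₁⟩ := this
    have heq : {y | ∃ x : Fin p → ℝ, 0 ≤ x ∧ (∀ i, i ∉ S → x i = 0) ∧ A x = y} =
        ⋃ k ∈ S, {y | ∃ x : Fin p → ℝ, 0 ≤ x ∧ (∀ i, i ∉ S.erase k → x i = 0) ∧ A x = y} := by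
      ext y
      simp only [Set.mem_iUnion]
      constructor
      · rintro ⟨x, h0, hx, rfl⟩
        obtain ⟨k, hk, hmin⟩ := (Finset.univ.filter (fun i => 0 < d i)).exists_min_image
          (fun i => x i / d i) ⟨i₁, by simpa using hi₁⟩
        simp only [Finset.mem_filter, Finset.mem_univ, true_and] at hk hmin
        have hkS : k ∈ S := by
          by_contra h
          exact hk.ne' (hS k h)
        have ht : 0 ≤ x k / d k := div_nonneg (h0 k) hk.le
        refine ⟨k, hkS, x - (x k / d k) • d, ?_, ?_, by simp [hA]⟩
        · intro j
          simp only [Pi.zero_apply, Pi.sub_apply, Pi.smul_apply, smul_eq_mul, sub_nonneg]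
          by_cases hj : 0 < d j
          · exact (le_div_iff₀ hj).mp (hmin j hj)
          · exact (mul_nonpos_of_nonneg_of_nonpos ht (not_lt.mp hj)).trans (h0 j)
        · intro j hj
          by_cases hjk : j = k
          · subst hjk
            simp [hk.ne']
          · have : j ∉ S := fun h => hj (Finset.mem_erase.mpr ⟨hjk, h⟩)
            simp [hx j this, hS j this]
      · rintro ⟨k, hk, x, h0, hx, rfl⟩
        exact ⟨x, h0, fun i hi => hx i (fun h => hi (Finset.mem_of_mem_erase h)), rfl⟩
    rw [heq]
    exact S.finite_toSet.isClosed_biUnion fun k hk => ih _ (Finset.erase_ssubset hk)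

/-- The set of solvable right-hand sides is closed. -/
lemma solvable_closed {p : ℕ} (M : Matrix (Fin p) (Fin p) ℝ) :
    IsClosed {b : Fin p → ℝ | ∃ x : Fin p → ℝ, 0 ≤ x ∧ 0 ≤ M.mulVec x + b ∧
      x ⬝ᵥ (M.mulVec x + b) = 0} := by
  classical
  let P : Finset (Fin p) → (Fin p → ℝ) →ₗ[ℝ] (Fin p → ℝ) := fun T =>
    Matrix.toLin' (Matrix.diagonal fun i => if i ∈ T then (1 : ℝ) else 0)
  have hP : ∀ T x i, P T x i = if i ∈ T then x i else 0 := by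
    intro T x i
    simp [P, Matrix.mulVec_diagonal]
  let A : Finset (Fin p) → (Fin p → ℝ) →ₗ[ℝ] (Fin p → ℝ) := fun T =>
    P Tᶜ - (Matrix.toLin' M).comp (P T)
  have hAx : ∀ T x, A T x = P Tᶜ x - M.mulVec (P T x) := by
    intro T x
    simp [A]
  have heq : {b : Fin p → ℝ | ∃ x : Fin p → ℝ, 0 ≤ x ∧ 0 ≤ M.mulVec x + b ∧
      x ⬝ᵥ (M.mulVec x + b) = 0} = ⋃ T : Finset (Fin p),
      {y | ∃ x : Fin p → ℝ, 0 ≤ x ∧ (∀ i, i ∉ Finset.univ → x i = 0) ∧ A T x = y} := by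
    ext b
    simp only [Set.mem_iUnion]
    constructor
    · rintro ⟨x, h0, hw, hc⟩
      have hc' : ∀ i, x i * (M.mulVec x + b) i = 0 := by
        intro i
        exact (Finset.sum_eq_zero_iff_of_nonneg
          (fun i _ => mul_nonneg (h0 i) (hw i))).mp hc i (Finset.mem_univ i)
      refine ⟨Finset.univ.filter (fun i => x i ≠ 0), x + (M.mulVec x + b),
        add_nonneg h0 hw, by simp, ?_⟩
      rw [hAx]
      have h1 : P (Finset.univ.filter (fun i => x i ≠ 0)) (x + (M.mulVec x + b)) = x := by
        ext i
        rw [hP]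
        by_cases hi : x i = 0
        · simp [hi]
        · have := (mul_eq_zero.mp (hc' i)).resolve_left hi
          rw [Pi.add_apply, this]
          simp [hi]
      have h2 : P (Finset.univ.filter (fun i => x i ≠ 0))ᶜ (x + (M.mulVec x + b))
          = M.mulVec x + b := by
        ext i
        rw [hP]
        by_cases hi : x i = 0
        · simp [hi]
        · have := (mul_eq_zero.mp (hc' i)).resolve_left hi
          rw [this]
          simp [hi]
      rw [h1, h2]
      simp
    · rintro ⟨T, x, h0, -, rfl⟩
      have hw : M.mulVec (P T x) + A T x = P Tᶜ x := by
        rw [hAx]; simp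
      refine ⟨P T x, ?_, ?_, ?_⟩
      · intro i
        rw [hP]
        split_ifs
        · exact h0 i
        · exact le_rfl
      · rw [hw]
        intro i
        rw [hP]
        split_ifs
        · exact h0 i
        · exact le_rfl
      · rw [hw]
        refine Finset.sum_eq_zero fun i _ => ?_
        rw [hP, hP]
        by_cases hi : i ∈ T <;> simp [hi]
  rw [heq]
  exact isClosed_iUnion_of_finite fun T => cone_closed_aux (A T) Finset.univ

/-- Strongly monotone complementarity problems are solvable. -/
lemma lcp_strong {p : ℕ} (N : Matrix (Fin p) (Fin p) ℝ) (b : Fin p → ℝ) (ε : ℝ) (hε : 0 < ε)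
    (hN : ∀ x : Fin p → ℝ, ε * (x ⬝ᵥ x) ≤ x ⬝ᵥ N.mulVec x) :
    ∃ x : Fin p → ℝ, 0 ≤ x ∧ 0 ≤ N.mulVec x + b ∧ ∀ i, x i * (N.mulVec x + b) i = 0 := by
  let L : ℝ := 1 + ε ^ 2 + ∑ i, ∑ j, N i j ^ 2
  have hs : 0 ≤ ∑ i, ∑ j, N i j ^ 2 := by positivity
  have hL : 0 < L := by positivity
  have hdd : ∀ x : Fin p → ℝ, 0 ≤ x ⬝ᵥ x := fun x =>
    Finset.sum_nonneg fun i _ => mul_self_nonneg _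
  have hNL : ∀ x : Fin p → ℝ, N.mulVec x ⬝ᵥ N.mulVec x ≤ L * (x ⬝ᵥ x) := by
    intro x
    have h1 : N.mulVec x ⬝ᵥ N.mulVec x ≤ (∑ i, ∑ j, N i j ^ 2) * (x ⬝ᵥ x) := by
      rw [Finset.sum_mul]
      refine Finset.sum_le_sum fun i _ => ?_
      have := Finset.sum_mul_sq_le_sq_mul_sq Finset.univ (fun j => N i j) x
      simp only [Matrix.mulVec, dotProduct, ← pow_two] at this ⊢
      exact this
    refine h1.trans (mul_le_mul_of_nonneg_right ?_ (hdd x))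
    simp only [L]
    nlinarith [sq_nonneg ε]
  let τ := ε / L
  have hτ : 0 < τ := by positivity
  let c := 1 - ε ^ 2 / L
  have hc0 : 0 ≤ c := by
    simp only [c, sub_nonneg]
    rw [div_le_one hL]
    simp only [L]
    linarith
  have hc1 : c < 1 := by
    have : 0 < ε ^ 2 / L := by positivity
    simp only [c]
    linarith
  let F : EuclideanSpace ℝ (Fin p) → EuclideanSpace ℝ (Fin p) := fun x =>
    WithLp.toLp 2 fun i => max 0 (x i - τ * (N.mulVec x.ofLp + b) i)
  have hF : ContractingWith (Real.toNNReal (√c)) F := by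
    constructor
    · rw [← NNReal.coe_lt_coe, Real.coe_toNNReal _ (Real.sqrt_nonneg _)]
      rw [NNReal.coe_one, Real.sqrt_lt' one_pos]
      simpa using hc1
    · refine LipschitzWith.of_dist_le_mul fun x y => ?_
      rw [Real.coe_toNNReal _ (Real.sqrt_nonneg _), EuclideanSpace.dist_eq,
        EuclideanSpace.dist_eq, ← Real.sqrt_mul hc0]
      apply Real.sqrt_le_sqrt
      simp only [Real.dist_eq, sq_abs]
      set d : Fin p → ℝ := x.ofLp - y.ofLp with hd
      have hNd : N.mulVec d = N.mulVec x.ofLp - N.mulVec y.ofLp := Matrix.mulVec_sub _ _ _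
      calc ∑ i, ((F x) i - (F y) i) ^ 2
          ≤ ∑ i, (d i - τ * N.mulVec d i) ^ 2 := by
            refine Finset.sum_le_sum fun i _ => ?_
            have h := abs_max_sub_max_le_abs (x i - τ * (N.mulVec x.ofLp + b) i)
              (y i - τ * (N.mulVec y.ofLp + b) i) 0
            have h2 := sq_le_sq.mpr h
            simp only [F, max_comm (0:ℝ)]
            refine h2.trans (le_of_eq ?_)
            rw [hNd, hd]
            simp only [Pi.sub_apply, Pi.add_apply]
            ring
        _ = d ⬝ᵥ d - 2 * τ * (d ⬝ᵥ N.mulVec d) + τ ^ 2 * (N.mulVec d ⬝ᵥ N.mulVec d) := by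
            simp only [dotProduct, Finset.mul_sum, ← Finset.sum_sub_distrib,
              ← Finset.sum_add_distrib]
            exact Finset.sum_congr rfl fun i _ => by ring
        _ ≤ d ⬝ᵥ d - 2 * τ * (ε * (d ⬝ᵥ d)) + τ ^ 2 * (L * (d ⬝ᵥ d)) := by
            have := hN d
            have := hNL d
            gcongr
        _ = c * (d ⬝ᵥ d) := by
            simp only [τ, c]
            field_simp
            ring
        _ = c * ∑ i, (x i - y i) ^ 2 := by
            congr 1
            exact Finset.sum_congr rfl fun i _ => by simp [hd, pow_two]
  let x := ContractingWith.fixedPoint F hF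
  have hx : F x = x := hF.fixedPoint_isFixedPt
  have hxi : ∀ i, max 0 (x i - τ * (N.mulVec x.ofLp + b) i) = x i := by
    intro i
    exact congrArg (fun v : EuclideanSpace ℝ (Fin p) => v i) hx
  have key : ∀ i, 0 ≤ x i ∧ 0 ≤ (N.mulVec x.ofLp + b) i ∧
      x i * (N.mulVec x.ofLp + b) i = 0 := by
    intro i
    have h := hxi i
    generalize (N.mulVec x.ofLp + b) i = w at h ⊢
    generalize x i = t at h ⊢
    rcases max_cases 0 (t - τ * w) with ⟨h1, h2⟩ | ⟨h1, h2⟩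
    · have ht : t = 0 := by rw [← h, h1]
      subst ht
      refine ⟨le_rfl, ?_, by simp⟩
      by_contra hw
      nlinarith [mul_pos hτ (neg_pos.mpr (not_le.mp hw))]
    · have : τ * w = 0 := by linarith
      have hw : w = 0 := (mul_eq_zero.mp this).resolve_left hτ.ne'
      subst hw
      refine ⟨by linarith, le_rfl, by simp⟩
  exact ⟨x.ofLp, fun i => (key i).1, fun i => (key i).2.1, fun i => (key i).2.2⟩

/-- If `M` is positive semi-definite (no symmetry assumed) and a feasible
point exists (`x ≥ 0`, `Mx + b ≥ 0`), then `LCP(M,b)` has a solution. -/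
theorem lcp_exists_of_psd_of_feasible {p : ℕ}
    (M : Matrix (Fin p) (Fin p) ℝ) (b : Fin p → ℝ)
    (hpsd : ∀ x : Fin p → ℝ, 0 ≤ x ⬝ᵥ M.mulVec x)
    (hfeas : ∃ x : Fin p → ℝ, 0 ≤ x ∧ 0 ≤ M.mulVec x + b) :
    ∃ x : Fin p → ℝ, 0 ≤ x ∧ 0 ≤ M.mulVec x + b ∧ x ⬝ᵥ (M.mulVec x + b) = 0 := by
  obtain ⟨z, hz, hq⟩ := hfeas
  suffices h : b ∈ closure {b : Fin p → ℝ | ∃ x : Fin p → ℝ, 0 ≤ x ∧ 0 ≤ M.mulVec x + b ∧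
      x ⬝ᵥ (M.mulVec x + b) = 0} by
    rw [(solvable_closed M).closure_eq] at h
    exact h
  rw [Metric.mem_closure_iff]
  intro δ hδ
  have hzz : 0 ≤ z ⬝ᵥ z := Finset.sum_nonneg fun i _ => mul_self_nonneg _
  have hzq : 0 ≤ z ⬝ᵥ (M.mulVec z + b) := Finset.sum_nonneg fun i _ => mul_nonneg (hz i) (hq i)
  let C := z ⬝ᵥ z + 2 * (z ⬝ᵥ (M.mulVec z + b)) + 1
  have hC : 0 < C := by positivity
  let ε := min 1 (δ ^ 2 / (2 * C))
  have hε : 0 < ε := lt_min one_pos (by positivity)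
  have hε1 : ε ≤ 1 := min_le_left _ _
  have hε2 : ε * C < δ ^ 2 := by
    have : ε * (2 * C) ≤ δ ^ 2 := (le_div_iff₀ (by positivity)).mp (min_le_right _ _)
    nlinarith [mul_pos hε hC]
  have hmul : ∀ x : Fin p → ℝ, (M + ε • (1 : Matrix (Fin p) (Fin p) ℝ)).mulVec x
      = M.mulVec x + ε • x := by
    intro x
    rw [Matrix.add_mulVec, Matrix.smul_mulVec, Matrix.one_mulVec]
  obtain ⟨x, hx, hw, hc⟩ := lcp_strong (M + ε • (1 : Matrix (Fin p) (Fin p) ℝ)) b ε hε (by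
    intro x
    rw [hmul, dotProduct_add, dotProduct_smul, smul_eq_mul]
    linarith [hpsd x])
  rw [hmul] at hw hc
  have hassoc : M.mulVec x + (b + ε • x) = M.mulVec x + ε • x + b := by abel
  refine ⟨b + ε • x, ⟨x, hx, ?_, ?_⟩, ?_⟩
  · rw [hassoc]; exact hw
  · rw [hassoc]; exact Finset.sum_eq_zero fun i _ => hc i
  · -- the bound on `ε • x`
    have h1 : 0 ≤ ∑ i, (x i - z i) * (M.mulVec x i - M.mulVec z i) := by
      have := hpsd (x - z)
      rw [Matrix.mulVec_sub] at this
      exact this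
    have h2 : ∑ i, (x i - z i) * (M.mulVec x i - M.mulVec z i) ≤
        ∑ i, (-(ε / 2) * (x i * x i) + ε / 2 * (z i * z i) + z i * (M.mulVec z + b) i) := by
      refine Finset.sum_le_sum fun i _ => ?_
      have a1 := hc i
      have a2 := mul_nonneg (hz i) (hw i)
      have a3 := mul_nonneg (hx i) (hq i)
      have a4 := mul_nonneg hε.le (sq_nonneg (x i - z i))
      simp only [Pi.add_apply, Pi.smul_apply, smul_eq_mul, Pi.zero_apply] at a1 a2 a3 a4 ⊢
      nlinarith
    rw [Finset.sum_add_distrib, Finset.sum_add_distrib, ← Finset.mul_sum, ← Finset.mul_sum] at h2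
    change _ ≤ -(ε / 2) * (x ⬝ᵥ x) + ε / 2 * (z ⬝ᵥ z) + z ⬝ᵥ (M.mulVec z + b) at h2
    have h3 : ε * (x ⬝ᵥ x) ≤ C := by
      simp only [C]
      nlinarith
    rw [dist_pi_lt_iff hδ]
    intro i
    have h4 : x i * x i ≤ x ⬝ᵥ x :=
      Finset.single_le_sum (f := fun i => x i * x i) (fun i _ => mul_self_nonneg _)
        (Finset.mem_univ i)
    have h5 : (ε * x i) ^ 2 < δ ^ 2 := by
      calc (ε * x i) ^ 2 = ε * (ε * (x i * x i)) := by ring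
        _ ≤ ε * (ε * (x ⬝ᵥ x)) := by gcongr
        _ ≤ ε * C := by gcongr
        _ < δ ^ 2 := hε2
    have h6 := abs_lt_of_sq_lt_sq h5 hδ.le
    rw [Real.dist_eq]
    simpa using h6
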